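/- Let n ≥ 1, let c ∈ ℝ and c < b ≤ +∞, and let B : [c,b) → ℂ^{2n×2n} be continuous with B(x) Hermitian for every x. Let u₁, …, u_d : [c,b) → ℂ^{2n} be continuously differentiable solutions of J u' = B(x) u such that lim_{x→b⁻} u_j(x)* J u_k(x) = 0 for all j, k ∈ {1,…,d}. Then: (i) u_j(x)* J u_k(x) = 0 for every x ∈ [c,b) and all j, k; (ii) if the vectors u₁(c), …, u_d(c) are linearly independent, then d ≤ n; (iii) if d = n and u₁(c), …, u_n(c) are linearly independent, then for every x ∈ [c,b) the vectors u₁(x), …, u_n(x) are linearly independent and span a Lagrangian subspace of ℂ^{2n}. -/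

import Mathlib

open Matrix

/-- The standard `2n × 2n` complex symplectic matrix `J = [[0, -Iₙ],[Iₙ, 0]]`,
with `ℂ^{2n}` realized as functions on `Fin n ⊕ Fin n`. -/
noncomputable def symJ (n : ℕ) : Matrix (Fin n ⊕ Fin n) (Fin n ⊕ Fin n) ℂ :=
  Matrix.fromBlocks 0 (-1) 1 0

/-! Along solutions of `J u' = B u` the pairing `u* J v` has derivative `-(B u)* v + u* B v = 0`,
so it is constant and equals its limit at the endpoint, which is `0`. The values of the solutions
at a point therefore span an isotropic subspace `W`; since `v* J w = 0` on `W`, the subspaces `W`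
and `J W` are orthogonal, hence `2 dim W` is at most the dimension of the ambient space. Finally, a
linear combination of solutions solves the linear system `f' = J⁻¹ B f`, so by Grönwall's
inequality it vanishes everywhere once it vanishes at one point. -/

open Filter Set Topology

section Isotropic

variable {𝕜 m : Type*} [RCLike 𝕜] [Fintype m]

/-- A subspace is isotropic for `A` if the sesquilinear form `(v, w) ↦ v* A w` vanishes on it. When
`A` is the symplectic matrix of size `2n`, the isotropic subspaces of dimension `n` are the
Lagrangian ones. -/
def IsIsotropic (A : Matrix m m 𝕜) (W : Submodule 𝕜 (m → 𝕜)) : Prop :=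
  ∀ v ∈ W, ∀ w ∈ W, star v ⬝ᵥ (A *ᵥ w) = 0

variable {A : Matrix m m 𝕜}

theorem isIsotropic_span {s : Set (m → 𝕜)} (h : ∀ v ∈ s, ∀ w ∈ s, star v ⬝ᵥ (A *ᵥ w) = 0) :
    IsIsotropic A (Submodule.span 𝕜 s) := by
  intro v hv w hw
  induction hv, hw using Submodule.span_induction₂ with
  | mem_mem v w hv hw => exact h v hv w hw
  | zero_left w _ => simp
  | zero_right v _ => simp
  | add_left v₁ v₂ w _ _ _ h₁ h₂ => rw [star_add, add_dotProduct, h₁, h₂, add_zero]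
  | add_right v w₁ w₂ _ _ _ h₁ h₂ => rw [mulVec_add, dotProduct_add, h₁, h₂, add_zero]
  | smul_left r v w _ _ h => rw [star_smul, smul_dotProduct, h, smul_zero]
  | smul_right r v w _ _ h => rw [mulVec_smul, dotProduct_smul, h, smul_zero]

theorem IsIsotropic.disjoint_map {W : Submodule 𝕜 (m → 𝕜)} (hW : IsIsotropic A W) :
    Disjoint W (W.map A.mulVecLin) := by
  rw [Submodule.disjoint_def]
  rintro _ hAw ⟨w, hw, rfl⟩
  open scoped ComplexOrder in
  exact dotProduct_star_self_eq_zero.1 (hW _ hAw w hw)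

theorem IsIsotropic.two_mul_finrank_le {W : Submodule 𝕜 (m → 𝕜)} (hW : IsIsotropic A W)
    (hA : Function.Injective A.mulVec) : 2 * Module.finrank 𝕜 W ≤ Fintype.card m := by
  have hmap : Module.finrank 𝕜 (W.map A.mulVecLin) = Module.finrank 𝕜 W :=
    (Submodule.equivMapOfInjective A.mulVecLin hA W).finrank_eq.symm
  calc 2 * Module.finrank 𝕜 W
      = Module.finrank 𝕜 W + Module.finrank 𝕜 (W.map A.mulVecLin) := by rw [hmap, two_mul]
    _ ≤ Module.finrank 𝕜 (m → 𝕜) := Submodule.finrank_add_finrank_le_of_disjoint hW.disjoint_map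
    _ = Fintype.card m := Module.finrank_fintype_fun_eq_card 𝕜

end Isotropic

section LinearODE

variable {E : Type*} [NormedAddCommGroup E] [NormedSpace ℝ E]

theorem eq_zero_of_norm_deriv_le_mul_norm {f f' : ℝ → E} {K x y : ℝ}
    (hf : ∀ t ∈ uIcc x y, HasDerivWithinAt f (f' t) (uIcc x y) t)
    (bound : ∀ t ∈ uIcc x y, ‖f' t‖ ≤ K * ‖f t‖) (hx : f x = 0) : f y = 0 := by
  -- Parametrizing the segment from `x` to `y` by `[0, 1]` covers both `x ≤ y` and `y ≤ x`.
  let γ : ℝ → ℝ := AffineMap.lineMap x y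
  have hγ : MapsTo γ (Icc 0 1) (uIcc x y) := fun s hs => by
    rw [← segment_eq_uIcc, segment_eq_image_lineMap]
    exact mem_image_of_mem γ hs
  have hfγ : ∀ s ∈ Icc (0 : ℝ) 1,
      HasDerivWithinAt (f ∘ γ) ((y - x) • f' (γ s)) (Icc 0 1) s := fun s hs =>
    (hf (γ s) (hγ hs)).scomp s AffineMap.hasDerivWithinAt_lineMap hγ
  have hfγ_one : (f ∘ γ) 1 = 0 := by
    refine eq_zero_of_abs_deriv_le_mul_abs_self_of_eq_zero_right (K := |y - x| * K)
      (fun s hs => (hfγ s hs).continuousWithinAt)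
      (fun s hs => (hfγ s (Ico_subset_Icc_self hs)).mono_of_mem_nhdsWithin
        (Icc_mem_nhdsGE_of_mem hs))
      (by simpa [γ] using hx) (fun s hs => ?_) 1 (right_mem_Icc.2 zero_le_one)
    rw [norm_smul, Real.norm_eq_abs, mul_assoc]
    exact mul_le_mul_of_nonneg_left (bound _ (hγ (Ico_subset_Icc_self hs))) (abs_nonneg _)
  simpa [γ] using hfγ_one

theorem linearIndependent_of_hasDerivWithinAt {𝕜 ι : Type*} [NontriviallyNormedField 𝕜]
    [NormedSpace 𝕜 E] [SMulCommClass ℝ 𝕜 E] {D : Set ℝ} [D.OrdConnected]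
    {A : ℝ → E →L[𝕜] E} (hA : ContinuousOn A D) {u : ι → ℝ → E}
    (hu : ∀ j, ∀ t ∈ D, HasDerivWithinAt (u j) (A t (u j t)) D t) {x y : ℝ} (hx : x ∈ D)
    (hy : y ∈ D) (hli : LinearIndependent 𝕜 fun j => u j x) :
    LinearIndependent 𝕜 fun j => u j y := by
  rw [linearIndependent_iff'] at hli ⊢
  intro s g hg
  have hsub : uIcc y x ⊆ D := OrdConnected.uIcc_subset ‹_› hy hx
  obtain ⟨K, hK⟩ := isCompact_uIcc.exists_bound_of_continuousOn (hA.mono hsub)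
  have hderiv : ∀ t ∈ uIcc y x, HasDerivWithinAt (fun t => ∑ j ∈ s, g j • u j t)
      (A t (∑ j ∈ s, g j • u j t)) (uIcc y x) t := fun t ht => by
    simp only [map_sum, map_smul]
    exact HasDerivWithinAt.fun_sum fun j _ => ((hu j t (hsub ht)).mono hsub).const_smul (g j)
  exact hli s g (eq_zero_of_norm_deriv_le_mul_norm hderiv
    (fun t ht => (A t).le_of_opNorm_le (hK t ht) _) hg)

theorem eq_of_hasDerivWithinAt_zero_of_tendsto {D : Set ℝ} [D.OrdConnected] {f : ℝ → E} {a : E}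
    {l : Filter ℝ} [l.NeBot] (hf : ∀ x ∈ D, HasDerivWithinAt f 0 D x) (hD : D ∈ l)
    (hlim : Tendsto f l (𝓝 a)) {x : ℝ} (hx : x ∈ D) : f x = a := by
  have hconst : ∀ y ∈ D, f y = f x := fun y hy => by
    simpa [sub_eq_zero] using
      (OrdConnected.convex ‹_›).norm_image_sub_le_of_norm_hasDerivWithin_le (C := 0) hf
        (fun _ _ => norm_zero.le) hx hy
  exact tendsto_nhds_unique (tendsto_const_nhds.congr' (eventually_of_mem hD fun y hy =>
    (hconst y hy).symm)) hlim

end LinearODE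

section HamiltonianSystem

variable {𝕜 m : Type*} [RCLike 𝕜] [Fintype m]

theorem hasDerivWithinAt_star_dotProduct_mulVec {D : Set ℝ} {x : ℝ} {f g : ℝ → m → 𝕜}
    {f' g' : m → 𝕜} (A : Matrix m m 𝕜) (hf : HasDerivWithinAt f f' D x)
    (hg : HasDerivWithinAt g g' D x) :
    HasDerivWithinAt (fun y => star (f y) ⬝ᵥ (A *ᵥ g y))
      (star f' ⬝ᵥ (A *ᵥ g x) + star (f x) ⬝ᵥ (A *ᵥ g')) D x := by
  rw [hasDerivWithinAt_pi] at hf hg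
  have hAg : ∀ i, HasDerivWithinAt (fun y => (A *ᵥ g y) i) ((A *ᵥ g') i) D x := fun i =>
    HasDerivWithinAt.fun_sum fun j _ => (hg j).const_mul (A i j)
  simp only [dotProduct, ← Finset.sum_add_distrib]
  exact HasDerivWithinAt.fun_sum fun i _ => (hf i).star.mul (hAg i)

theorem hasDerivWithinAt_pairing_zero {J B : Matrix m m 𝕜} (hJ : Jᴴ = -J) (hB : B.IsHermitian)
    {D : Set ℝ} {x : ℝ} {u v : ℝ → m → 𝕜} {u' v' : m → 𝕜}
    (hu : HasDerivWithinAt u u' D x) (hv : HasDerivWithinAt v v' D x)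
    (hu_ode : J *ᵥ u' = B *ᵥ u x) (hv_ode : J *ᵥ v' = B *ᵥ v x) :
    HasDerivWithinAt (fun y => star (u y) ⬝ᵥ (J *ᵥ v y)) 0 D x := by
  have hderiv : star u' ⬝ᵥ (J *ᵥ v x) + star (u x) ⬝ᵥ (J *ᵥ v') = 0 := by
    calc star u' ⬝ᵥ (J *ᵥ v x) + star (u x) ⬝ᵥ (J *ᵥ v')
        = -(star (J *ᵥ u') ⬝ᵥ v x) + star (u x) ⬝ᵥ (J *ᵥ v') := by
          rw [star_mulVec, hJ, vecMul_neg, neg_dotProduct, neg_neg, dotProduct_mulVec]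
      _ = -(star (B *ᵥ u x) ⬝ᵥ v x) + star (u x) ⬝ᵥ (B *ᵥ v x) := by rw [hu_ode, hv_ode]
      _ = 0 := by rw [star_mulVec, hB.eq, dotProduct_mulVec, neg_add_cancel]
  exact hderiv ▸ hasDerivWithinAt_star_dotProduct_mulVec J hu hv

variable [DecidableEq m] {ι : Type*}

theorem linearIndependent_of_mulVec_deriv_eq {J : Matrix m m 𝕜} (hJ : IsUnit J.det)
    {D : Set ℝ} [D.OrdConnected] {B : ℝ → Matrix m m 𝕜} (hB : ContinuousOn B D)
    {u u' : ι → ℝ → m → 𝕜} (hu : ∀ j, ∀ t ∈ D, HasDerivWithinAt (u j) (u' j t) D t)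
    (hode : ∀ j, ∀ t ∈ D, J *ᵥ u' j t = B t *ᵥ u j t) {x y : ℝ} (hx : x ∈ D) (hy : y ∈ D)
    (hli : LinearIndependent 𝕜 fun j => u j x) : LinearIndependent 𝕜 fun j => u j y := by
  let toCLM : Matrix m m 𝕜 →ₗ[𝕜] (m → 𝕜) →L[𝕜] (m → 𝕜) :=
    LinearMap.toContinuousLinearMap.toLinearMap ∘ₗ Matrix.toLin'.toLinearMap
  have hcont : ContinuousOn (fun t => toCLM (J⁻¹ * B t)) D :=
    toCLM.continuous_of_finiteDimensional.comp_continuousOn (continuousOn_const.mul hB)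
  refine linearIndependent_of_hasDerivWithinAt hcont (fun j t ht => ?_) hx hy hli
  have hu' : u' j t = toCLM (J⁻¹ * B t) (u j t) := by
    change u' j t = (J⁻¹ * B t) *ᵥ u j t
    rw [← mulVec_mulVec, ← hode j t ht, mulVec_mulVec, nonsing_inv_mul J hJ, one_mulVec]
  exact hu' ▸ hu j t ht

theorem limiting_lagrangian_solutions_general [Fintype ι] {J : Matrix m m 𝕜} (hJ : Jᴴ = -J)
    (hJdet : IsUnit J.det) {D : Set ℝ} [D.OrdConnected] {l : Filter ℝ} [l.NeBot] (hD : D ∈ l)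
    {B : ℝ → Matrix m m 𝕜} (hBcont : ContinuousOn B D) (hBherm : ∀ x ∈ D, (B x).IsHermitian)
    {u u' : ι → ℝ → m → 𝕜} (hu : ∀ j, ∀ x ∈ D, HasDerivWithinAt (u j) (u' j x) D x)
    (hode : ∀ j, ∀ x ∈ D, J *ᵥ u' j x = B x *ᵥ u j x)
    (hlim : ∀ j k, Tendsto (fun x => star (u j x) ⬝ᵥ (J *ᵥ u k x)) l (𝓝 0))
    {c : ℝ} (hc : c ∈ D) :
    (∀ x ∈ D, ∀ j k, star (u j x) ⬝ᵥ (J *ᵥ u k x) = 0)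
    ∧ (LinearIndependent 𝕜 (fun j => u j c) → 2 * Fintype.card ι ≤ Fintype.card m)
    ∧ (LinearIndependent 𝕜 (fun j => u j c) → ∀ x ∈ D,
        LinearIndependent 𝕜 (fun j => u j x)
        ∧ Module.finrank 𝕜 (Submodule.span 𝕜 (range fun j => u j x)) = Fintype.card ι
        ∧ IsIsotropic J (Submodule.span 𝕜 (range fun j => u j x))) := by
  have hpair : ∀ x ∈ D, ∀ j k, star (u j x) ⬝ᵥ (J *ᵥ u k x) = 0 := fun x hx j k =>
    eq_of_hasDerivWithinAt_zero_of_tendsto (fun y hy => hasDerivWithinAt_pairing_zero hJ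
      (hBherm y hy) (hu j y hy) (hu k y hy) (hode j y hy) (hode k y hy)) hD (hlim j k) hx
  have hiso : ∀ x ∈ D, IsIsotropic J (Submodule.span 𝕜 (range fun j => u j x)) := fun x hx =>
    isIsotropic_span (forall_mem_range.2 fun j => forall_mem_range.2 (hpair x hx j))
  refine ⟨hpair, fun hli => ?_, fun hli x hx => ?_⟩
  · rw [← finrank_span_eq_card hli]
    exact (hiso c hc).two_mul_finrank_le
      (mulVec_injective_iff_isUnit.2 ((isUnit_iff_isUnit_det J).2 hJdet))
  · have hlix := linearIndependent_of_mulVec_deriv_eq hJdet hBcont hu hode hc hx hli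
    exact ⟨hlix, finrank_span_eq_card hlix, hiso x hx⟩

end HamiltonianSystem

theorem symJ_conjTranspose (n : ℕ) : (symJ n)ᴴ = -symJ n := by
  simp [symJ, fromBlocks_conjTranspose, fromBlocks_neg]

theorem isUnit_det_symJ (n : ℕ) : IsUnit (symJ n).det :=
  isUnit_det_J (Fin n) ℂ

theorem neBot_comap_coe_nhdsLT {b : EReal} (hb : b ≠ ⊥) :
    (comap ((↑) : ℝ → EReal) (𝓝[<] b)).NeBot :=
  ((nhdsLT_basis_of_exists_lt ⟨⊥, bot_lt_iff_ne_bot.2 hb⟩).comap _).neBot_iff.2 fun hl =>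
    EReal.lt_iff_exists_real_btwn.1 hl

/-- Solutions of `J u' = B(x) u` on `[c, b)` (with `b ≤ +∞`, encoded as `b : EReal`)
whose mutual symplectic pairings vanish in the limit `x → b⁻` have identically vanishing
pairings; at most `n` of them can be linearly independent, and `n` linearly independent
such solutions span a Lagrangian subspace of `ℂ^{2n}` at every `x`. -/
theorem limiting_lagrangian_solutions
    (n d : ℕ) (hn : 1 ≤ n) (c : ℝ) (b : EReal) (hcb : (c : EReal) < b)
    (D : Set ℝ) (hD : D = {x : ℝ | c ≤ x ∧ (x : EReal) < b})
    (B : ℝ → Matrix (Fin n ⊕ Fin n) (Fin n ⊕ Fin n) ℂ)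
    (u u' : Fin d → ℝ → (Fin n ⊕ Fin n) → ℂ)
    (hBcont : ∀ i j, ContinuousOn (fun x => B x i j) D)
    (hBherm : ∀ x ∈ D, (B x).IsHermitian)
    (hu : ∀ j, ∀ x ∈ D, HasDerivWithinAt (u j) (u' j x) D x)
    (hu'cont : ∀ j, ContinuousOn (u' j) D)
    (hode : ∀ j, ∀ x ∈ D, symJ n *ᵥ u' j x = B x *ᵥ u j x)
    (hlim : ∀ j k, Filter.Tendsto (fun x => star (u j x) ⬝ᵥ (symJ n *ᵥ u k x))
        (Filter.comap (fun x : ℝ => (x : EReal)) (nhdsWithin b (Set.Iio b))) (nhds 0)) :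
    (∀ x ∈ D, ∀ j k, star (u j x) ⬝ᵥ (symJ n *ᵥ u k x) = 0)
    ∧ (LinearIndependent ℂ (fun j => u j c) → d ≤ n)
    ∧ (d = n → LinearIndependent ℂ (fun j => u j c) →
        ∀ x ∈ D, LinearIndependent ℂ (fun j => u j x)
          ∧ Module.finrank ℂ (Submodule.span ℂ (Set.range (fun j => u j x))) = n
          ∧ ∀ v ∈ Submodule.span ℂ (Set.range (fun j => u j x)),
              ∀ w ∈ Submodule.span ℂ (Set.range (fun j => u j x)),
                star v ⬝ᵥ (symJ n *ᵥ w) = 0) := by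
  have hDIco : D = ((↑) : ℝ → EReal) ⁻¹' Ico c b := by simp [hD, Ico, preimage]
  have hDord : D.OrdConnected :=
    hDIco ▸ ordConnected_Ico.preimage_mono EReal.coe_strictMono.monotone
  have hDmem : D ∈ comap ((↑) : ℝ → EReal) (𝓝[<] b) :=
    hDIco ▸ preimage_mem_comap (Ico_mem_nhdsLT hcb)
  have hcD : c ∈ D := hD ▸ ⟨le_rfl, hcb⟩
  have := neBot_comap_coe_nhdsLT hcb.ne_bot
  obtain ⟨hpair, hcard, hspan⟩ := limiting_lagrangian_solutions_general (symJ_conjTranspose n)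
    (isUnit_det_symJ n) hDmem (continuousOn_pi.2 fun i => continuousOn_pi.2 (hBcont i)) hBherm hu
    hode hlim hcD
  refine ⟨hpair, fun hli => ?_, fun hdn hli x hx => ?_⟩
  · have hle := hcard hli
    simp only [Fintype.card_fin, Fintype.card_sum] at hle
    lia
  · simpa only [Fintype.card_fin, hdn, IsIsotropic] using hspan hli x hx
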